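/- (Evaluation at the escape point.) One has ₂F₁(1/3, 2/3; 1; (3√3/4)·(√3 − 1)) = (3√3/2)^{1/4} · (√(√3 + 1) / (2π)^{3/2}) · Γ(1/4)², where Γ is the Gamma function. (The argument (3√3/4)(√3 − 1) ≈ 0.951 lies in (0,1), so the hypergeometric series converges absolutely.) -/

import Mathlib

open Real

/-- Gauss hypergeometric function ₂F₁ defined via its power series
    (the tsum; converges absolutely for |z| < 1). -/
noncomputable def hyp2F1 (a b c z : ℝ) : ℝ :=
  ∑' n : ℕ, ((ascPochhammer ℝ n).eval a * (ascPochhammer ℝ n).eval b /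
      (ascPochhammer ℝ n).eval c) * z ^ n / (Nat.factorial n)

/-!
Ramanujan's cubic transformation writes `₂F₁(1/2, 1/2; 1; α)` as an explicit multiple of
`₂F₁(1/3, 2/3; 1; β)`, where `α` and `β` are rational functions of a parameter `p`. It holds because
both sides, as functions of `p`, solve the same equation `(Q f')' = W f` with `Q` vanishing at `0`:
the Wronskian of two solutions regular at `0`, multiplied by `Q`, is constant and hence zero, so
such a solution is determined by its value at `0`. The escape-point argument is `β` at the parameter
where `α = 1/2`, and there Euler's integral for the left side turns, after a quadratic substitution,
into a beta integral.
-/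

section Hypergeometric

open FormalMultilinearSeries

theorem hasFPowerSeriesOnBall_deriv_ofScalars {𝕜 : Type*} [NontriviallyNormedField 𝕜]
    [CompleteSpace 𝕜] {f : 𝕜 → 𝕜} {u : ℕ → 𝕜} {x : 𝕜} {r : ENNReal}
    (h : HasFPowerSeriesOnBall f (ofScalars 𝕜 u) x r) :
    HasFPowerSeriesOnBall (deriv f) (ofScalars 𝕜 fun n => (n + 1) * u (n + 1)) x r := by
  have hderiv := (ContinuousLinearMap.apply 𝕜 𝕜 (1 : 𝕜)).comp_hasFPowerSeriesOnBall h.fderiv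
  have hseries : ofScalars 𝕜 (fun n => (n + 1) * u (n + 1)) =
      (ContinuousLinearMap.apply 𝕜 𝕜 (1 : 𝕜)).compFormalMultilinearSeries
        (ofScalars 𝕜 u).derivSeries := by
    refine FormalMultilinearSeries.ext fun n => ?_
    rw [← mkPiRing_coeff_eq (ofScalars 𝕜 _), ← mkPiRing_coeff_eq
      (ContinuousLinearMap.compFormalMultilinearSeries _ _), coeff_ofScalars]
    congr 1
    have := (ofScalars 𝕜 u).derivSeries_coeff_one n
    rw [coeff_ofScalars, nsmul_eq_mul] at this
    exact_mod_cast this.symm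
  rw [hseries]
  exact hderiv.congr fun y _ => by simp

variable {a b c x : ℝ}

theorem hyp2F1_eq_ordinaryHypergeometric (a b c : ℝ) : hyp2F1 a b c = ₂F₁ a b c := by
  rw [ordinaryHypergeometric_eq_tsum]
  funext x
  exact tsum_congr fun n => by rw [smul_eq_mul]; ring

theorem one_le_radius_ordinaryHypergeometricSeries (a b c : ℝ) :
    1 ≤ (ordinaryHypergeometricSeries ℝ a b c).radius := by
  by_cases h : ∀ k : ℕ, (k : ℝ) ≠ -a ∧ (k : ℝ) ≠ -b ∧ (k : ℝ) ≠ -c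
  · exact (ordinaryHypergeometricSeries_radius_eq_one ℝ a b c h).ge
  · simp only [not_forall, not_and_or, not_not, ← neg_eq_iff_eq_neg] at h
    obtain ⟨k, rfl | rfl | rfl⟩ := h
    · exact (ordinaryHypergeometric_radius_top_of_neg_nat₁ ℝ b c).symm ▸ le_top
    · exact (ordinaryHypergeometric_radius_top_of_neg_nat₂ ℝ a c).symm ▸ le_top
    · exact (ordinaryHypergeometric_radius_top_of_neg_nat₃ ℝ a b).symm ▸ le_top

theorem hasFPowerSeriesOnBall_ordinaryHypergeometric (a b c : ℝ) :
    HasFPowerSeriesOnBall (₂F₁ a b c) (ordinaryHypergeometricSeries ℝ a b c) 0 1 :=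
  have hr := one_le_radius_ordinaryHypergeometricSeries a b c
  ((ordinaryHypergeometricSeries ℝ a b c).hasFPowerSeriesOnBall (one_pos.trans_le hr)).mono
    one_pos hr

theorem mem_eball_zero_one_iff : x ∈ Metric.eball (0 : ℝ) 1 ↔ |x| < 1 := by
  rw [← ENNReal.ofReal_one, Metric.eball_ofReal, mem_ball_zero_iff, norm_eq_abs]

theorem hasSum_of_hasFPowerSeriesOnBall_ofScalars {f : ℝ → ℝ} {u : ℕ → ℝ}
    (h : HasFPowerSeriesOnBall f (ofScalars ℝ u) 0 1) (hx : |x| < 1) :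
    HasSum (fun n => u n * x ^ n) (f x) := by
  simpa [mul_comm] using h.hasSum (mem_eball_zero_one_iff.2 hx)

theorem hasSum_ordinaryHypergeometric (a b c : ℝ) (hx : |x| < 1) :
    HasSum (fun n => ordinaryHypergeometricCoefficient a b c n * x ^ n) (₂F₁ a b c x) :=
  hasSum_of_hasFPowerSeriesOnBall_ofScalars
    (hasFPowerSeriesOnBall_ordinaryHypergeometric a b c) hx

theorem ordinaryHypergeometric_pos (ha : 0 < a) (hb : 0 < b) (hc : 0 < c) (hx₀ : 0 ≤ x)
    (hx₁ : x < 1) : 0 < ₂F₁ a b c x := by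
  have hu (n : ℕ) : 0 < ordinaryHypergeometricCoefficient a b c n := by
    have := ascPochhammer_pos n a ha
    have := ascPochhammer_pos n b hb
    have := ascPochhammer_pos n c hc
    positivity
  have hsum := hasSum_ordinaryHypergeometric a b c (abs_lt.2 ⟨by linarith, hx₁⟩)
  rw [← hsum.tsum_eq]
  exact hsum.summable.tsum_pos (fun n => mul_nonneg (hu n).le (pow_nonneg hx₀ n)) 0 (by simp)

theorem ordinaryHypergeometricCoefficient_succ (hc : ∀ k : ℕ, (k : ℝ) ≠ -c) (a b : ℝ) (n : ℕ) :
    (n + 1) * (c + n) * ordinaryHypergeometricCoefficient a b c (n + 1) =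
      (a + n) * (b + n) * ordinaryHypergeometricCoefficient a b c n := by
  have hn : (n : ℝ) + 1 ≠ 0 := by positivity
  have hcn : c + n ≠ 0 := fun h => hc n (by linarith)
  simp only [ordinaryHypergeometricCoefficient, ascPochhammer_succ_eval, Nat.factorial_succ,
    Nat.cast_mul, Nat.cast_succ, mul_inv]
  field_simp

theorem hasSum_mul_pow_of_hasSum_succ {v : ℕ → ℝ} {s : ℝ} (hv : v 0 = 0)
    (h : HasSum (fun n => v (n + 1) * x ^ n) s) : HasSum (fun n => v n * x ^ n) (x * s) := by
  rw [← hasSum_nat_add_iff' 1]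
  simpa [hv, pow_succ, mul_comm, mul_left_comm, mul_assoc] using h.mul_left x

theorem ordinaryHypergeometric_ode (hc : ∀ k : ℕ, (k : ℝ) ≠ -c) (a b : ℝ) (hx : |x| < 1) :
    x * (1 - x) * deriv (deriv (₂F₁ a b c)) x + (c - (a + b + 1) * x) * deriv (₂F₁ a b c) x =
      a * b * ₂F₁ a b c x := by
  have hu := ordinaryHypergeometricCoefficient_succ hc a b
  have hF := hasFPowerSeriesOnBall_ordinaryHypergeometric a b c
  rw [ordinaryHypergeometricSeries] at hF
  generalize ordinaryHypergeometricCoefficient a b c = u at hu hF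
  have hF' := hasFPowerSeriesOnBall_deriv_ofScalars hF
  have sum₀ := hasSum_of_hasFPowerSeriesOnBall_ofScalars hF hx
  have sum₁ := hasSum_of_hasFPowerSeriesOnBall_ofScalars hF' hx
  have sum₂ := hasSum_of_hasFPowerSeriesOnBall_ofScalars
    (hasFPowerSeriesOnBall_deriv_ofScalars hF') hx
  have x_sum₁ := hasSum_mul_pow_of_hasSum_succ (v := fun n => n * u n) (by simp)
    (by simpa using sum₁)
  have x_sum₂ := hasSum_mul_pow_of_hasSum_succ (v := fun n => n * ((n + 1) * u (n + 1))) (by simp)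
    (by simpa using sum₂)
  have xx_sum₂ := hasSum_mul_pow_of_hasSum_succ (v := fun n => (n - 1) * (n * u n)) (by simp)
    (by simpa using x_sum₂)
  have lhs := (x_sum₂.sub xx_sum₂).add ((sum₁.mul_left c).sub (x_sum₁.mul_left (a + b + 1)))
  have rhs := sum₀.mul_left (a * b)
  have lhs_eq_rhs := lhs.tsum_eq.symm.trans <|
    (tsum_congr fun n => by linear_combination x ^ n * hu n).trans rhs.tsum_eq
  linear_combination lhs_eq_rhs

end Hypergeometric

section SturmLiouville

open Set

/-- `f`, with derivative `f'`, solves the Sturm–Liouville equation `(Q f')' = W f` on `s`.  The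
derivative is an argument so that the equation only involves the values of `f` and `f'` on `s`. -/
structure IsSturmLiouvilleSolution (Q W f f' : ℝ → ℝ) (s : Set ℝ) : Prop where
  hasDerivWithinAt : ∀ x ∈ s, HasDerivWithinAt f (f' x) s x
  hasDerivWithinAt_flux : ∀ x ∈ s, HasDerivWithinAt (fun y => Q y * f' y) (W x * f x) s x

theorem eq_of_hasDerivAt_zero {f : ℝ → ℝ} {a b : ℝ} (hab : a < b)
    (hf : ContinuousOn f (Icc a b)) (hf' : ∀ x ∈ Ioo a b, HasDerivAt f 0 x) : f b = f a := by
  obtain ⟨x, -, hx⟩ := exists_hasDerivAt_eq_slope f 0 hab hf hf'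
  rcases div_eq_zero_iff.1 hx.symm with h | h
  · exact sub_eq_zero.1 h
  · exact absurd h (sub_pos.2 hab).ne'

namespace IsSturmLiouvilleSolution

variable {Q W f f' g g' : ℝ → ℝ} {s t : Set ℝ}

theorem comp {φ φ' P V : ℝ → ℝ} {k : ℝ} (hf : IsSturmLiouvilleSolution Q W f f' t)
    (hφ : ∀ x ∈ s, HasDerivWithinAt φ (φ' x) s x) (hst : MapsTo φ s t)
    (hP : ∀ x ∈ s, P x * φ' x = k * Q (φ x)) (hV : ∀ x ∈ s, V x = k * W (φ x) * φ' x) :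
    IsSturmLiouvilleSolution P V (f ∘ φ) (fun x => f' (φ x) * φ' x) s where
  hasDerivWithinAt x hx := (hf.hasDerivWithinAt _ (hst hx)).comp x (hφ x hx) hst
  hasDerivWithinAt_flux x hx := by
    have h := ((hf.hasDerivWithinAt_flux _ (hst hx)).comp x (hφ x hx) hst).const_mul k
    refine (h.congr_of_mem (fun y hy => ?_) hx).congr_deriv ?_
    · rw [Function.comp_apply]
      linear_combination f' (φ y) * hP y hy
    · rw [Function.comp_apply]
      linear_combination -f (φ x) * hV x hx

theorem mul {R u u' : ℝ → ℝ} (hg : IsSturmLiouvilleSolution (fun x => Q x * u x ^ 2) R g g' s)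
    (hu₀ : ∀ x ∈ s, u x ≠ 0) (hu : ∀ x ∈ s, HasDerivWithinAt u (u' x) s x)
    (hu' : ∀ x ∈ s, HasDerivWithinAt (fun y => Q y * u' y) (W x * u x - R x / u x) s x) :
    IsSturmLiouvilleSolution Q W (fun x => u x * g x) (fun x => u' x * g x + u x * g' x) s where
  hasDerivWithinAt x hx := (hu x hx).mul (hg.hasDerivWithinAt x hx)
  hasDerivWithinAt_flux x hx := by
    -- `(Q (u g)')' = (Q u')' g + (Q u² g')' / u`
    have h := ((hu' x hx).mul (hg.hasDerivWithinAt x hx)).add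
      ((hg.hasDerivWithinAt_flux x hx).div (hu x hx) (hu₀ x hx))
    refine (h.congr_of_mem (fun y hy => ?_) hx).congr_deriv ?_
    · have := hu₀ y hy
      simp only [Pi.add_apply, Pi.mul_apply, Pi.div_apply]
      field_simp
    · have := hu₀ x hx
      field_simp
      ring

theorem wronskian_eq_zero {a b x : ℝ} (hf : IsSturmLiouvilleSolution Q W f f' (Ico a b))
    (hg : IsSturmLiouvilleSolution Q W g g' (Ico a b)) (hQa : Q a = 0) (hx : x ∈ Ioo a b) :
    Q x * (f x * g' x - g x * f' x) = 0 := by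
  have hderiv (y : ℝ) (hy : y ∈ Ico a b) : HasDerivWithinAt
      (fun y => f y * (Q y * g' y) - g y * (Q y * f' y)) 0 (Ico a b) y :=
    (((hf.hasDerivWithinAt y hy).mul (hg.hasDerivWithinAt_flux y hy)).sub
      ((hg.hasDerivWithinAt y hy).mul (hf.hasDerivWithinAt_flux y hy))).congr_deriv (by ring)
  have hsub : Icc a x ⊆ Ico a b := Icc_subset_Ico_right hx.2
  have := eq_of_hasDerivAt_zero hx.1
    (fun y hy => (hderiv y (hsub hy)).continuousWithinAt.mono hsub)
    fun y hy => (hderiv y (hsub (Ioo_subset_Icc_self hy))).hasDerivAt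
      (Ico_mem_nhds hy.1 (hy.2.trans hx.2))
  simp only [hQa] at this
  linear_combination this

theorem eqOn_of_eq_left {a b : ℝ} (hf : IsSturmLiouvilleSolution Q W f f' (Ico a b))
    (hg : IsSturmLiouvilleSolution Q W g g' (Ico a b)) (hQa : Q a = 0)
    (hQ : ∀ x ∈ Ioo a b, Q x ≠ 0) (hf₀ : ∀ x ∈ Ico a b, f x ≠ 0) (hfg : f a = g a) :
    EqOn f g (Ico a b) := by
  intro x hx
  rcases hx.1.eq_or_lt with rfl | hax
  · exact hfg
  have hsub : Icc a x ⊆ Ico a b := Icc_subset_Ico_right hx.2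
  have hderiv (y : ℝ) (hy : y ∈ Ico a b) :=
    (hg.hasDerivWithinAt y hy).div (hf.hasDerivWithinAt y hy) (hf₀ y hy)
  have hratio : (g / f) x = (g / f) a := by
    refine eq_of_hasDerivAt_zero hax
      (fun y hy => (hderiv y (hsub hy)).continuousWithinAt.mono hsub) fun y hy => ?_
    have hy' : y ∈ Ioo a b := ⟨hy.1, hy.2.trans hx.2⟩
    have hw := (mul_eq_zero.1 (hf.wronskian_eq_zero hg hQa hy')).resolve_left (hQ y hy')
    refine ((hderiv y (Ioo_subset_Ico_self hy')).hasDerivAt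
      (Ico_mem_nhds hy'.1 hy'.2)).congr_deriv ?_
    rw [div_eq_zero_iff]
    exact .inl (by linear_combination hw)
  have hfa := hf₀ a (left_mem_Ico.2 (hax.trans hx.2))
  rw [Pi.div_apply, Pi.div_apply, ← hfg, div_self hfa, div_eq_one_iff_eq (hf₀ x hx)] at hratio
  exact hratio.symm

end IsSturmLiouvilleSolution

theorem isSturmLiouvilleSolution_ordinaryHypergeometric {a b : ℝ} (hab : a + b = 1) :
    IsSturmLiouvilleSolution (fun x => x * (1 - x)) (fun _ => a * b) (₂F₁ a b 1)
      (deriv (₂F₁ a b 1)) (Ico 0 1) := by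
  have hF (x : ℝ) (hx : x ∈ Ico 0 1) : AnalyticAt ℝ (₂F₁ a b (1 : ℝ)) x :=
    (hasFPowerSeriesOnBall_ordinaryHypergeometric a b 1).analyticOnNhd x
      (mem_eball_zero_one_iff.2 (abs_lt.2 ⟨by linarith [hx.1], hx.2⟩))
  refine ⟨fun x hx => (hF x hx).differentiableAt.hasDerivAt.hasDerivWithinAt, fun x hx => ?_⟩
  have hode := ordinaryHypergeometric_ode (c := 1)
    (fun k => (neg_one_lt_zero.trans_le k.cast_nonneg).ne') a b
    (abs_lt.2 ⟨by linarith [hx.1], hx.2⟩ : |x| < 1)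
  have hweight : HasDerivAt (fun y : ℝ => y * (1 - y)) (1 - 2 * x) x :=
    ((hasDerivAt_id' x).mul ((hasDerivAt_id' x).const_sub 1)).congr_deriv (by ring)
  refine (hweight.mul (hF x hx).deriv.differentiableAt.hasDerivAt).hasDerivWithinAt.congr_deriv ?_
  linear_combination hode + x * deriv (₂F₁ a b 1) x * hab

end SturmLiouville

section CubicTransformation

open Set

variable {p : ℝ}

/-- The modulus `α = p³(2+p)/(1+2p)` of the elliptic side of Ramanujan's cubic transformation. -/
noncomputable def ellipticModulus (p : ℝ) : ℝ := p ^ 3 * (2 + p) / (1 + 2 * p)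

/-- The modulus `β = 27p²(1+p)²/(4(1+p+p²)³)` of the cubic side of Ramanujan's cubic
transformation. -/
noncomputable def cubicModulus (p : ℝ) : ℝ := 27 * p ^ 2 * (1 + p) ^ 2 / (4 * (1 + p + p ^ 2) ^ 3)

/-- The multiplier `√(1+2p)/(1+p+p²)` of Ramanujan's cubic transformation. -/
noncomputable def cubicMultiplier (p : ℝ) : ℝ := √(1 + 2 * p) / (1 + p + p ^ 2)

theorem hasDerivAt_ellipticModulus (hp : 0 ≤ p) :
    HasDerivAt ellipticModulus (6 * p ^ 2 * (1 + p) ^ 2 / (1 + 2 * p) ^ 2) p := by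
  have hden : 1 + 2 * p ≠ 0 := by positivity
  have h := ((hasDerivAt_pow 3 p).mul ((hasDerivAt_id' p).const_add 2)).div
    (((hasDerivAt_id' p).const_mul 2).const_add 1) hden
  refine h.congr_deriv ?_
  simp only [Pi.mul_apply]
  field_simp
  ring

theorem hasDerivAt_cubicModulus (hp : 0 ≤ p) :
    HasDerivAt cubicModulus
      (27 * p * (1 + p) * (1 + 2 * p) * (1 - p) * (2 + p) / (4 * (1 + p + p ^ 2) ^ 4)) p := by
  have hden : 1 + p + p ^ 2 ≠ 0 := by positivity
  have h := (((hasDerivAt_pow 2 p).const_mul 27).mul (((hasDerivAt_id' p).const_add 1).pow 2)).div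
    (((((hasDerivAt_id' p).const_add 1).add (hasDerivAt_pow 2 p)).pow 3).const_mul 4)
    (mul_ne_zero four_ne_zero (pow_ne_zero 3 hden))
  refine h.congr_deriv ?_
  simp only [Pi.mul_apply, Pi.add_apply, Pi.pow_apply]
  field_simp
  ring

theorem one_sub_ellipticModulus (hp : 0 ≤ p) :
    1 - ellipticModulus p = (1 - p) * (1 + p) ^ 3 / (1 + 2 * p) := by
  rw [ellipticModulus]
  field_simp
  ring

theorem one_sub_cubicModulus (hp : 0 ≤ p) :
    1 - cubicModulus p = ((1 - p) * (2 + p) * (1 + 2 * p)) ^ 2 / (4 * (1 + p + p ^ 2) ^ 3) := by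
  have hden : 1 + p + p ^ 2 ≠ 0 := by positivity
  rw [cubicModulus]
  field_simp
  ring

theorem mapsTo_ellipticModulus : MapsTo ellipticModulus (Ico 0 1) (Ico 0 1) := by
  rintro p ⟨hp₀, hp₁⟩
  have hp : 0 < 1 - p := sub_pos.2 hp₁
  refine ⟨by rw [ellipticModulus]; positivity, sub_pos.1 ?_⟩
  rw [one_sub_ellipticModulus hp₀]
  positivity

theorem mapsTo_cubicModulus : MapsTo cubicModulus (Ico 0 1) (Ico 0 1) := by
  rintro p ⟨hp₀, hp₁⟩
  have hp : 0 < 1 - p := sub_pos.2 hp₁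
  refine ⟨by rw [cubicModulus]; positivity, sub_pos.1 ?_⟩
  rw [one_sub_cubicModulus hp₀]
  positivity

theorem cubicMultiplier_pos (hp : 0 ≤ p) : 0 < cubicMultiplier p := by
  rw [cubicMultiplier]
  positivity

theorem cubicMultiplier_sq (hp : 0 ≤ p) :
    cubicMultiplier p ^ 2 = (1 + 2 * p) / (1 + p + p ^ 2) ^ 2 := by
  rw [cubicMultiplier, div_pow, sq_sqrt (by positivity)]

theorem hasDerivAt_cubicMultiplier (hp : 0 ≤ p) :
    HasDerivAt cubicMultiplier
      (-(3 * p * (1 + p) / ((1 + 2 * p) * (1 + p + p ^ 2))) * cubicMultiplier p) p := by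
  have hsqrt : 1 + 2 * p ≠ 0 := by positivity
  have hden : 1 + p + p ^ 2 ≠ 0 := by positivity
  have h := ((((hasDerivAt_id' p).const_mul 2).const_add 1).sqrt hsqrt).div
    (((hasDerivAt_id' p).const_add 1).add (hasDerivAt_pow 2 p)) hden
  refine h.congr_deriv ?_
  have hsq : √(1 + 2 * p) ^ 2 = 1 + 2 * p := sq_sqrt (by positivity)
  have hne : √(1 + 2 * p) ≠ 0 := by positivity
  rw [cubicMultiplier]
  simp only [Pi.add_apply]
  field_simp
  rw [hsq]
  ring

theorem isSturmLiouvilleSolution_comp_ellipticModulus :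
    IsSturmLiouvilleSolution (fun p => p * (1 - p) * (1 + p) * (2 + p) / 6)
      (fun p => 3 * p ^ 2 * (1 + p) ^ 2 / (2 * (1 + 2 * p) ^ 2))
      (₂F₁ (1 / 2 : ℝ) (1 / 2) 1 ∘ ellipticModulus)
      (fun p => deriv (₂F₁ (1 / 2 : ℝ) (1 / 2) 1) (ellipticModulus p) *
        (6 * p ^ 2 * (1 + p) ^ 2 / (1 + 2 * p) ^ 2)) (Ico 0 1) := by
  have hF := isSturmLiouvilleSolution_ordinaryHypergeometric (a := 1 / 2) (b := 1 / 2) (by norm_num)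
  refine hF.comp (k := 1)
    (fun p hp => (hasDerivAt_ellipticModulus hp.1).hasDerivWithinAt) mapsTo_ellipticModulus
    (fun p hp => ?_) fun p _ => ?_
  · rw [one_sub_ellipticModulus hp.1, ellipticModulus]
    field_simp
  · field_simp
    ring

theorem isSturmLiouvilleSolution_comp_cubicModulus :
    IsSturmLiouvilleSolution
      (fun p => p * (1 - p) * (1 + p) * (2 + p) / 6 * cubicMultiplier p ^ 2)
      (fun p => p * (1 + p) * (1 + 2 * p) * (1 - p) * (2 + p) / (1 + p + p ^ 2) ^ 4)
      (₂F₁ (1 / 3 : ℝ) (2 / 3) 1 ∘ cubicModulus)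
      (fun p => deriv (₂F₁ (1 / 3 : ℝ) (2 / 3) 1) (cubicModulus p) *
        (27 * p * (1 + p) * (1 + 2 * p) * (1 - p) * (2 + p) / (4 * (1 + p + p ^ 2) ^ 4)))
      (Ico 0 1) := by
  have hF := isSturmLiouvilleSolution_ordinaryHypergeometric (a := 1 / 3) (b := 2 / 3) (by norm_num)
  refine hF.comp (k := 2 / 3)
    (fun p hp => (hasDerivAt_cubicModulus hp.1).hasDerivWithinAt) mapsTo_cubicModulus
    (fun p hp => ?_) fun p _ => ?_
  · have hp₀ := hp.1
    have hden : 1 + p + p ^ 2 ≠ 0 := by positivity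
    rw [one_sub_cubicModulus hp.1, cubicMultiplier_sq hp.1, cubicModulus]
    field_simp
    ring
  · field_simp
    ring

theorem hasDerivAt_cubicMultiplier_flux (hp : 0 ≤ p) :
    HasDerivAt
      (fun p => p * (1 - p) * (1 + p) * (2 + p) / 6 *
        (-(3 * p * (1 + p) / ((1 + 2 * p) * (1 + p + p ^ 2))) * cubicMultiplier p))
      (3 * p ^ 2 * (1 + p) ^ 2 / (2 * (1 + 2 * p) ^ 2) * cubicMultiplier p -
        p * (1 + p) * (1 + 2 * p) * (1 - p) * (2 + p) / (1 + p + p ^ 2) ^ 4 /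
          cubicMultiplier p) p := by
  have hden₁ : 1 + 2 * p ≠ 0 := by positivity
  have hden₂ : 1 + p + p ^ 2 ≠ 0 := by positivity
  have hid := hasDerivAt_id' p
  have hweight :=
    (((hid.mul (hid.const_sub 1)).mul (hid.const_add 1)).mul (hid.const_add 2)).div_const 6
  have hlog := (((hid.const_mul 3).mul (hid.const_add 1)).div
    (((hid.const_mul 2).const_add 1).mul ((hid.const_add 1).add (hasDerivAt_pow 2 p)))
    (mul_ne_zero hden₁ hden₂)).neg
  have h := hweight.mul (hlog.mul (hasDerivAt_cubicMultiplier hp))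
  refine h.congr_deriv ?_
  have hu := cubicMultiplier_pos hp
  have hinv : 1 / cubicMultiplier p =
      (1 + p + p ^ 2) ^ 2 / (1 + 2 * p) * cubicMultiplier p := by
    have hsq := cubicMultiplier_sq hp
    field_simp at hsq ⊢
    linear_combination -hsq
  rw [div_eq_mul_one_div _ (cubicMultiplier p), hinv]
  simp only [Pi.mul_apply, Pi.add_apply, Pi.div_apply, Pi.neg_apply]
  field_simp
  ring

theorem ordinaryHypergeometric_cubic_transformation (hp : p ∈ Ico 0 1) :
    ₂F₁ (1 / 2 : ℝ) (1 / 2) 1 (ellipticModulus p) =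
      cubicMultiplier p * ₂F₁ (1 / 3 : ℝ) (2 / 3) 1 (cubicModulus p) := by
  refine isSturmLiouvilleSolution_comp_ellipticModulus.eqOn_of_eq_left
    (isSturmLiouvilleSolution_comp_cubicModulus.mul (fun p hp => (cubicMultiplier_pos hp.1).ne')
      (fun p hp => (hasDerivAt_cubicMultiplier hp.1).hasDerivWithinAt)
      fun p hp => (hasDerivAt_cubicMultiplier_flux hp.1).hasDerivWithinAt)
    (by simp) (fun p hp => ?_) (fun p hp => ?_) ?_ hp
  · have hp₀ := hp.1
    have hp₁ := sub_pos.2 hp.2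
    positivity
  · have hα := mapsTo_ellipticModulus hp
    exact (ordinaryHypergeometric_pos (by norm_num) (by norm_num) one_pos hα.1 hα.2).ne'
  · simp [ellipticModulus, cubicModulus, cubicMultiplier]

end CubicTransformation

section EulerIntegral

open MeasureTheory Set

open ProbabilityTheory (beta beta_pos)

variable {a b c x : ℝ}

theorem setIntegral_rpow_mul_one_sub_rpow (ha : 0 < a) (hb : 0 < b) :
    ∫ t in Ioo (0 : ℝ) 1, t ^ (a - 1) * (1 - t) ^ (b - 1) = beta a b := by
  have hcomplex : Complex.betaIntegral a b =
      ((∫ t in (0 : ℝ)..1, t ^ (a - 1) * (1 - t) ^ (b - 1) : ℝ) : ℂ) := by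
    rw [Complex.betaIntegral, ← intervalIntegral.integral_ofReal]
    refine intervalIntegral.integral_congr fun t ht => ?_
    rw [uIcc_of_le zero_le_one] at ht
    rw [Complex.ofReal_mul, Complex.ofReal_cpow ht.1, Complex.ofReal_cpow (sub_nonneg.2 ht.2)]
    push_cast
    rfl
  rw [ProbabilityTheory.beta_eq_betaIntegralReal a b ha hb, hcomplex, Complex.ofReal_re,
    intervalIntegral.integral_of_le zero_le_one, integral_Ioc_eq_integral_Ioo]

theorem integrableOn_rpow_mul_one_sub_rpow (ha : 0 < a) (hb : 0 < b) :
    IntegrableOn (fun t : ℝ => t ^ (a - 1) * (1 - t) ^ (b - 1)) (Ioo 0 1) := by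
  refine .of_integral_ne_zero ?_
  rw [setIntegral_rpow_mul_one_sub_rpow ha hb]
  exact (beta_pos ha hb).ne'

theorem Gamma_add_natCast (ha : 0 < a) (n : ℕ) :
    Gamma (a + n) = (ascPochhammer ℝ n).eval a * Gamma a := by
  induction n with
  | zero => simp
  | succ n ih =>
    rw [Nat.cast_succ, ← add_assoc, Gamma_add_one (by positivity), ih, ascPochhammer_succ_eval]
    ring

theorem beta_add_natCast (ha : 0 < a) (hb : 0 < b) (n : ℕ) :
    beta (a + n) b =
      (ascPochhammer ℝ n).eval a / (ascPochhammer ℝ n).eval (a + b) * beta a b := by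
  rw [beta, beta, add_right_comm, Gamma_add_natCast ha, Gamma_add_natCast (add_pos ha hb)]
  ring

theorem hasSum_ascPochhammer_mul_pow (a : ℝ) (hx : |x| < 1) :
    HasSum (fun n : ℕ => (ascPochhammer ℝ n).eval a / n.factorial * x ^ n) ((1 - x) ^ (-a)) := by
  have h := hasSum_of_hasFPowerSeriesOnBall_ofScalars
    (one_div_one_sub_rpow_hasFPowerSeriesOnBall_zero a) hx
  rw [one_div, ← rpow_neg (by linarith [(abs_lt.1 hx).2])] at h
  refine h.congr_fun fun n => ?_
  have hchoose := Ring.factorial_nsmul_multichoose_eq_ascPochhammer a n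
  rw [Polynomial.ascPochhammer_smeval_eq_eval, nsmul_eq_mul] at hchoose
  rw [Ring.choose, show a + n - 1 - n + 1 = a by ring, ← hchoose,
    mul_div_cancel_left₀ _ (by positivity)]

theorem hasSum_euler_integrand (a b c : ℝ) (hx : |x| < 1) {t : ℝ} (ht : t ∈ Ioo 0 1) :
    HasSum (fun n : ℕ => (ascPochhammer ℝ n).eval a / n.factorial * x ^ n *
        (t ^ (b + n - 1) * (1 - t) ^ (c - b - 1)))
      (t ^ (b - 1) * (1 - t) ^ (c - b - 1) * (1 - x * t) ^ (-a)) := by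
  have hxt : |x * t| < 1 := by
    rw [abs_mul, abs_of_pos ht.1]
    exact mul_lt_one_of_nonneg_of_lt_one_left (abs_nonneg x) hx ht.2.le
  refine ((hasSum_ascPochhammer_mul_pow a hxt).mul_left _).congr_fun fun n => ?_
  rw [add_sub_right_comm, rpow_add_natCast ht.1.ne', mul_pow]
  ring

/-- Expand `(1 - x t) ^ (-a)` by the binomial series and integrate termwise; the `n`th moment of
the beta weight supplies the factor `(b)_n / (c)_n`. -/
theorem euler_integral_ordinaryHypergeometric (a : ℝ) (hb : 0 < b) (hbc : b < c) (hx : |x| < 1) :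
    ∫ t in Ioo (0 : ℝ) 1, t ^ (b - 1) * (1 - t) ^ (c - b - 1) * (1 - x * t) ^ (-a) =
      beta b (c - b) * ₂F₁ a b c x := by
  have hcb : 0 < c - b := sub_pos.2 hbc
  let term (n : ℕ) (t : ℝ) : ℝ := (ascPochhammer ℝ n).eval a / n.factorial * x ^ n *
    (t ^ (b + n - 1) * (1 - t) ^ (c - b - 1))
  have term_integrable (n : ℕ) : IntegrableOn (term n) (Ioo 0 1) :=
    (integrableOn_rpow_mul_one_sub_rpow (by positivity) hcb).const_mul _
  have term_moment (n : ℕ) : (ascPochhammer ℝ n).eval a / n.factorial * x ^ n *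
      beta (b + n) (c - b) =
      beta b (c - b) * (ordinaryHypergeometricCoefficient a b c n * x ^ n) := by
    rw [beta_add_natCast hb hcb, add_sub_cancel]
    ring
  have term_integral (n : ℕ) : ∫ t in Ioo 0 1, term n t =
      beta b (c - b) * (ordinaryHypergeometricCoefficient a b c n * x ^ n) := by
    rw [integral_const_mul, setIntegral_rpow_mul_one_sub_rpow (by positivity) hcb, term_moment]
  have term_norm_integral (n : ℕ) : ∫ t in Ioo 0 1, ‖term n t‖ =
      |beta b (c - b) * (ordinaryHypergeometricCoefficient a b c n * x ^ n)| := by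
    rw [← term_moment, abs_mul, abs_of_pos (beta_pos (by positivity) hcb),
      ← setIntegral_rpow_mul_one_sub_rpow (by positivity) hcb, ← integral_const_mul]
    refine setIntegral_congr_fun measurableSet_Ioo fun t ht => ?_
    have ht₀ := ht.1
    have ht₁ := sub_pos.2 ht.2
    simp only [term]
    rw [norm_mul, norm_eq_abs, norm_of_nonneg (by positivity)]
  have hsum := (hasSum_ordinaryHypergeometric a b c hx).mul_left (beta b (c - b))
  have hint := hasSum_integral_of_summable_integral_norm term_integrable
    (by simpa only [term_norm_integral] using hsum.summable.abs)
  simp only [term_integral] at hint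
  rw [← hint.unique hsum]
  exact setIntegral_congr_fun measurableSet_Ioo fun t ht =>
    (hasSum_euler_integrand a b c hx ht).tsum_eq.symm

end EulerIntegral

section Bailey

open MeasureTheory Set

open ProbabilityTheory (beta)

variable {b c : ℝ}

theorem image_one_sub_sq_Ioo : (fun t : ℝ => (1 - t) ^ 2) '' Ioo 0 1 = Ioo 0 1 := by
  refine Subset.antisymm ?_ fun y hy => ?_
  · rintro _ ⟨t, ht, rfl⟩
    have ht₁ := sub_pos.2 ht.2
    exact ⟨by positivity, pow_lt_one₀ ht₁.le (by linarith [ht.1]) two_ne_zero⟩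
  · have hy₁ : √y < 1 := by simpa using sqrt_lt_sqrt hy.1.le hy.2
    exact ⟨1 - √y, ⟨by linarith, by linarith [sqrt_pos.2 hy.1]⟩, by simp [hy.1.le]⟩

theorem setIntegral_Ioo_comp_one_sub_sq (g : ℝ → ℝ) :
    ∫ t in Ioo 0 1, 2 * (1 - t) * g ((1 - t) ^ 2) = ∫ y in Ioo 0 1, g y := by
  have hderiv (t : ℝ) : HasDerivAt (fun t : ℝ => (1 - t) ^ 2) (-(2 * (1 - t))) t := by
    simpa using ((hasDerivAt_id' t).const_sub 1).fun_pow 2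
  have hanti : AntitoneOn (fun t : ℝ => (1 - t) ^ 2) (Ioo 0 1) := fun s _ t ht hst =>
    pow_le_pow_left₀ (sub_nonneg.2 ht.2.le) (by linarith) 2
  have h := integral_image_eq_integral_deriv_smul_of_antitoneOn measurableSet_Ioo
    (fun t _ => (hderiv t).hasDerivWithinAt) hanti g
  simpa [image_one_sub_sq_Ioo] using h.symm

/-- With `y = (1 - t) ^ 2` one has `t * (1 - t / 2) = (1 - y) / 2`, so at argument `1 / 2` the Euler
integrand is again a beta density. -/
theorem setIntegral_euler_integrand_half (hb : 0 < b) (hbc : b < c) :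
    ∫ t in Ioo (0 : ℝ) 1, t ^ (b - 1) * (1 - t) ^ (c - b - 1) * (1 - 1 / 2 * t) ^ (-(1 - b)) =
      2 ^ (-b) * beta ((c - b) / 2) b := by
  rw [← setIntegral_rpow_mul_one_sub_rpow (half_pos (sub_pos.2 hbc)) hb,
    ← setIntegral_Ioo_comp_one_sub_sq fun y => y ^ ((c - b) / 2 - 1) * (1 - y) ^ (b - 1),
    ← integral_const_mul]
  refine setIntegral_congr_fun measurableSet_Ioo fun t ht => ?_
  have ht₀ : 0 < t := ht.1
  have ht₁ : 0 < 1 - t := sub_pos.2 ht.2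
  have ht₂ : 0 < 1 - 1 / 2 * t := by linarith [ht.2]
  have hone_sub : 1 - (1 - t) ^ 2 = 2 * (t * (1 - 1 / 2 * t)) := by ring
  have hpow : (1 - t) * ((1 - t) ^ 2) ^ ((c - b) / 2 - 1) = (1 - t) ^ (c - b - 1) := by
    rw [← rpow_natCast_mul ht₁.le, mul_comm, ← rpow_add_one ht₁.ne']
    congr 1
    push_cast
    ring
  have htwo : (2 : ℝ) ^ (-b) * 2 * 2 ^ (b - 1) = 1 := by
    rw [← rpow_add_one two_ne_zero, ← rpow_add two_pos]
    simp
  simp only [neg_sub, hone_sub]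
  rw [mul_rpow two_pos.le (by positivity), mul_rpow ht₀.le ht₂.le, ← hpow]
  linear_combination (-(t ^ (b - 1) * (1 - 1 / 2 * t) ^ (b - 1) *
    ((1 - t) * ((1 - t) ^ 2) ^ ((c - b) / 2 - 1)))) * htwo

theorem ordinaryHypergeometric_bailey (hb : 0 < b) (hbc : b < c) :
    ₂F₁ (1 - b) b c (1 / 2 : ℝ) =
      2 ^ (-b) * (Gamma c * Gamma ((c - b) / 2)) / (Gamma (c - b) * Gamma ((c + b) / 2)) := by
  have hcb : 0 < c - b := sub_pos.2 hbc
  have heuler := euler_integral_ordinaryHypergeometric (1 - b) hb hbc (x := 1 / 2)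
    (by norm_num [abs_of_pos])
  rw [setIntegral_euler_integrand_half hb hbc, beta, beta, add_sub_cancel,
    show (c - b) / 2 + b = (c + b) / 2 by ring] at heuler
  have hΓc := Gamma_pos_of_pos (hb.trans hbc)
  have hΓ := Gamma_pos_of_pos (show 0 < (c + b) / 2 by linarith)
  field_simp at heuler ⊢
  linear_combination -heuler

theorem Gamma_one_quarter_mul_Gamma_three_quarters :
    Gamma (1 / 4) * Gamma (3 / 4) = π * √2 := by
  have h := Gamma_mul_Gamma_one_sub (1 / 4)
  rw [show (1 : ℝ) - 1 / 4 = 3 / 4 by norm_num, show π * (1 / 4) = π / 4 by ring,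
    sin_pi_div_four] at h
  rw [h]
  field_simp
  exact (sq_sqrt two_pos.le).symm

theorem ordinaryHypergeometric_half_half_one_apply_half :
    ₂F₁ (1 / 2 : ℝ) (1 / 2) 1 (1 / 2 : ℝ) = Gamma (1 / 4) ^ 2 / (2 * π * √π) := by
  have hbailey : ₂F₁ (1 / 2 : ℝ) (1 / 2) 1 (1 / 2 : ℝ) =
      (√2)⁻¹ * Gamma (1 / 4) / (√π * Gamma (3 / 4)) := by
    convert ordinaryHypergeometric_bailey (b := 1 / 2) (c := 1) one_half_pos
      one_half_lt_one using 1 <;>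
    norm_num [Gamma_one_half_eq, rpow_neg, ← sqrt_eq_rpow]
  have hsqrt : √2 ^ 2 = 2 := sq_sqrt two_pos.le
  rw [hbailey]
  field_simp
  linear_combination -√2 * Gamma_one_quarter_mul_Gamma_three_quarters - π * hsqrt

end Bailey

section LemniscaticPoint

open Set

/-- The parameter at which the elliptic modulus of the cubic transformation takes the lemniscatic
value `1 / 2`; it is the positive root of `p * (1 + p) = (1 + √3) / 2`. -/
noncomputable def lemniscaticParameter : ℝ := (√(3 + 2 * √3) - 1) / 2

theorem one_add_two_mul_lemniscaticParameter :
    1 + 2 * lemniscaticParameter = √(3 + 2 * √3) := by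
  rw [lemniscaticParameter]
  ring

theorem lemniscaticParameter_mul_one_add :
    lemniscaticParameter * (1 + lemniscaticParameter) = (1 + √3) / 2 := by
  have hsq : √(3 + 2 * √3) ^ 2 = 3 + 2 * √3 := sq_sqrt (by positivity)
  rw [lemniscaticParameter]
  linear_combination hsq / 4

theorem one_add_lemniscaticParameter_add_sq :
    1 + lemniscaticParameter + lemniscaticParameter ^ 2 = √3 * (1 + √3) / 2 := by
  have hsq : √3 ^ 2 = 3 := sq_sqrt (by norm_num)
  linear_combination lemniscaticParameter_mul_one_add - hsq / 2

theorem lemniscaticParameter_mem_Ico : lemniscaticParameter ∈ Ico 0 1 := by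
  have hsq : √3 ^ 2 = 3 := sq_sqrt (by norm_num)
  have h₁ : 1 ≤ √(3 + 2 * √3) := one_le_sqrt.2 (by linarith [sqrt_nonneg 3])
  have h₃ : √(3 + 2 * √3) < 3 := (sqrt_lt' (by norm_num)).2 (by nlinarith)
  constructor <;> rw [lemniscaticParameter] <;> linarith

theorem ellipticModulus_lemniscaticParameter :
    ellipticModulus lemniscaticParameter = 1 / 2 := by
  have hp := lemniscaticParameter_mem_Ico.1
  have hq := lemniscaticParameter_mul_one_add
  have hsq : √3 ^ 2 = 3 := sq_sqrt (by norm_num)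
  set p := lemniscaticParameter
  rw [ellipticModulus, div_eq_iff (by positivity)]
  linear_combination (p * (1 + p) + (1 + √3) / 2 - 1) * hq + hsq / 4

theorem cubicModulus_lemniscaticParameter :
    cubicModulus lemniscaticParameter = 3 * √3 / 4 * (√3 - 1) := by
  have hsq : √3 ^ 2 = 3 := sq_sqrt (by norm_num)
  rw [cubicModulus, mul_assoc, ← mul_pow, lemniscaticParameter_mul_one_add,
    one_add_lemniscaticParameter_add_sq]
  field_simp
  linear_combination -3 * (√3 ^ 4 + 2 * √3 ^ 2 + 6) * hsq

theorem mul_cubicMultiplier_lemniscaticParameter :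
    (3 * √3 / 2) ^ (1 / 4 : ℝ) * √(√3 + 1) * cubicMultiplier lemniscaticParameter = √2 := by
  have hp := lemniscaticParameter_mem_Ico.1
  have hm := cubicMultiplier_pos hp
  have hsq : √3 ^ 2 = 3 := sq_sqrt (by norm_num)
  have hroot : ((3 * √3 / 2) ^ (1 / 4 : ℝ)) ^ 4 = 3 * √3 / 2 := by
    rw [← rpow_mul_natCast (by positivity)]
    norm_num
  have hmul : cubicMultiplier lemniscaticParameter ^ 4 =
      (3 + 2 * √3) / (√3 * (1 + √3) / 2) ^ 4 := by
    rw [pow_mul _ 2 2, cubicMultiplier_sq hp, one_add_lemniscaticParameter_add_sq,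
      one_add_two_mul_lemniscaticParameter, div_pow, sq_sqrt (by positivity), ← pow_mul]
  refine (pow_left_inj₀ (by positivity) (by positivity) four_ne_zero).1 ?_
  rw [mul_pow, mul_pow, hroot, hmul, pow_mul √(√3 + 1) 2 2, sq_sqrt (by positivity),
    add_comm √3 1, pow_mul √2 2 2, sq_sqrt two_pos.le]
  field_simp
  linear_combination -(√3 ^ 3 + 2 * √3 ^ 2 + 4 * √3 + 6) * hsq

theorem two_mul_pi_rpow_three_halves : (2 * π) ^ (3 / 2 : ℝ) = √2 * (2 * π * √π) := by
  rw [show (3 : ℝ) / 2 = 1 + 1 / 2 by norm_num, rpow_one_add' (by positivity) (by norm_num),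
    ← sqrt_eq_rpow, sqrt_mul two_pos.le]
  ring

end LemniscaticPoint

/-- Evaluation of ₂F₁(1/3,2/3;1;·) at the escape-point argument. -/
theorem escape_point_evaluation :
    hyp2F1 (1/3) (2/3) 1 (3 * Real.sqrt 3 / 4 * (Real.sqrt 3 - 1)) =
      (3 * Real.sqrt 3 / 2) ^ ((1:ℝ)/4) *
        (Real.sqrt (Real.sqrt 3 + 1) / (2 * π) ^ ((3:ℝ)/2)) *
        Real.Gamma (1/4) ^ 2 := by
  have hcubic := ordinaryHypergeometric_cubic_transformation lemniscaticParameter_mem_Ico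
  rw [ellipticModulus_lemniscaticParameter, cubicModulus_lemniscaticParameter,
    ordinaryHypergeometric_half_half_one_apply_half] at hcubic
  have hmultiplier := mul_cubicMultiplier_lemniscaticParameter
  have hm := cubicMultiplier_pos lemniscaticParameter_mem_Ico.1
  rw [hyp2F1_eq_ordinaryHypergeometric, two_mul_pi_rpow_three_halves, ← mul_div_assoc,
    eq_div_of_mul_eq hm.ne' hmultiplier, ← mul_right_inj' hm.ne', ← hcubic]
  field_simp
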